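/- Let N be a positive integer with N ≥ (γ²/(4ε²))·(∑_x √(q_x) + √(8·log(2/δ)))² for given ε > 0 and δ ∈ (0,1). Then the signed empirical estimator p̃ built from N i.i.d. samples satisfies P( (1/2)·∑_x |p_x − p̃_x| ≤ ε ) ≥ 1 − δ. (Proposition 1: sampling cost of the probability-estimation-based weak distillation.) -/

import Mathlib

open MeasureTheory Finset
open ProbabilityTheory Function
open scoped NNReal

/-!
The estimator is the empirical mean of the `ℝ^ι`-valued samples `γ·S·e_X`, which have `ℓ¹` norm `γ`
and mean `p`. The `ℓ¹` error `∑ x, |p x - p̃ x|` of `N` samples therefore changes by at most `2γ/N`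
when one sample is changed; iterating Hoeffding's lemma over the coordinates (McDiarmid's argument)
shows that the centred error is sub-Gaussian with variance proxy `γ²/N`. By Jensen's inequality and
independence the expected error is at most the sum of the standard deviations `√(γ² q x / N)`.
Hence the error exceeds `γ (∑ x, √(q x) + √(2 log (1/δ))) / √N` with probability at most `δ`.

Singletons of `ι` need not be measurable, so the tail bound is first proved for the discrete
`σ`-algebra. It transfers to any other one because the measure of a finite set is at most the sum
of the masses of its points, with equality in the discrete case.
-/

section BoundedDifferences

lemma hasSubgaussianMGF_sub_integral_of_sub_le {α : Type*} [MeasurableSpace α] {μ : Measure α}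
    [IsProbabilityMeasure μ] {f : α → ℝ} (hf : AEMeasurable f μ) {c : ℝ≥0}
    (hfc : ∀ a b, f a - f b ≤ c) :
    HasSubgaussianMGF (fun a ↦ f a - μ[f]) ((c / 2) ^ 2) μ := by
  have : Nonempty α := nonempty_of_isProbabilityMeasure μ
  have hbdd : BddBelow (Set.range f) := by
    refine ⟨f (Classical.arbitrary α) - c, ?_⟩
    rintro _ ⟨a, rfl⟩
    linarith [hfc (Classical.arbitrary α) a]
  have hmem (a : α) : f a ∈ Set.Icc (⨅ b, f b) ((⨅ b, f b) + c) :=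
    ⟨ciInf_le hbdd a, sub_le_iff_le_add.1 <| le_ciInf fun b ↦ sub_le_comm.1 (hfc a b)⟩
  simpa using hasSubgaussianMGF_of_mem_Icc hf (.of_forall hmem)

variable {α β : Type*} [MeasurableSpace α] [MeasurableSpace β]
  {μ : Measure α} {ν : Measure β}

lemma hasSubgaussianMGF_prod_add [SFinite μ] [SFinite ν] {X : α → ℝ} {Y : α × β → ℝ} {c d : ℝ≥0}
    (hX : HasSubgaussianMGF X c μ) (hYm : AEMeasurable Y (μ.prod ν))
    (hY : ∀ᵐ a ∂μ, HasSubgaussianMGF (fun b ↦ Y (a, b)) d ν) :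
    HasSubgaussianMGF (fun z ↦ X z.1 + Y z) (c + d) (μ.prod ν) := by
  have hexp (t : ℝ) (z : α × β) :
      Real.exp (t * (X z.1 + Y z)) = Real.exp (t * X z.1) * Real.exp (t * Y z) := by
    rw [mul_add, Real.exp_add]
  have hsection (t : ℝ) : ∀ᵐ a ∂μ, ∫ b, Real.exp (t * (X a + Y (a, b))) ∂ν ≤
      Real.exp (t * X a) * Real.exp (d * t ^ 2 / 2) := by
    filter_upwards [hY] with a ha
    simp_rw [hexp t (a, _), integral_const_mul]
    gcongr
    exact ha.mgf_le t
  have hbound (t : ℝ) :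
      Integrable (fun a ↦ Real.exp (t * X a) * Real.exp (d * t ^ 2 / 2)) μ :=
    (hX.integrable_exp_mul t).mul_const _
  have hint (t : ℝ) : Integrable (fun z ↦ Real.exp (t * (X z.1 + Y z))) (μ.prod ν) := by
    have hmeas : AEStronglyMeasurable (fun z ↦ Real.exp (t * (X z.1 + Y z))) (μ.prod ν) :=
      (Real.measurable_exp.comp_aemeasurable
        ((hX.aemeasurable.comp_fst.add hYm).const_mul t)).aestronglyMeasurable
    rw [integrable_prod_iff hmeas]
    simp_rw [Real.norm_eq_abs, Real.abs_exp]
    constructor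
    · filter_upwards [hY] with a ha
      simpa only [hexp t (a, _)] using (ha.integrable_exp_mul t).const_mul _
    · refine (hbound t).mono' hmeas.integral_prod_right' ?_
      filter_upwards [hsection t] with a ha
      rwa [Real.norm_of_nonneg (integral_nonneg fun _ ↦ (Real.exp_pos _).le)]
  refine ⟨hint, fun t ↦ ?_⟩
  calc mgf (fun z ↦ X z.1 + Y z) (μ.prod ν) t
      = ∫ a, ∫ b, Real.exp (t * (X a + Y (a, b))) ∂ν ∂μ := integral_prod _ (hint t)
    _ ≤ ∫ a, Real.exp (t * X a) * Real.exp (d * t ^ 2 / 2) ∂μ :=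
        integral_mono_ae (hint t).integral_prod_left (hbound t) (hsection t)
    _ = mgf X μ t * Real.exp (d * t ^ 2 / 2) := integral_mul_const _ _
    _ ≤ Real.exp (c * t ^ 2 / 2) * Real.exp (d * t ^ 2 / 2) := by gcongr; exact hX.mgf_le t
    _ = Real.exp ((c + d : ℝ≥0) * t ^ 2 / 2) := by
        rw [← Real.exp_add, NNReal.coe_add]; congr 1; ring

lemma hasSubgaussianMGF_prod_sub_integral [IsProbabilityMeasure μ] [IsProbabilityMeasure ν]
    {g : α × β → ℝ} (hg : Measurable g) {c d : ℝ≥0} (hgc : ∀ a a' b, g (a, b) - g (a', b) ≤ c)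
    (hgd : ∀ a, HasSubgaussianMGF (fun b ↦ g (a, b) - ∫ b', g (a, b') ∂ν) d ν) :
    HasSubgaussianMGF (fun z ↦ g z - (μ.prod ν)[g]) ((c / 2) ^ 2 + d) (μ.prod ν) := by
  let h : α → ℝ := fun a ↦ ∫ b, g (a, b) ∂ν
  have hint (a : α) : Integrable (fun b ↦ g (a, b)) ν := by
    simpa only [Pi.add_def, h, sub_add_cancel] using
      (hgd a).integrable.add (integrable_const (h a))
  have hmeas : Measurable h := hg.stronglyMeasurable.integral_prod_right'.measurable
  have hosc (a a' : α) : h a - h a' ≤ c := by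
    rw [← integral_sub (hint a) (hint a')]
    simpa using integral_mono ((hint a).sub (hint a')) (integrable_const (c : ℝ)) (hgc a a')
  have hsub : HasSubgaussianMGF (fun z ↦ g z - μ[h]) ((c / 2) ^ 2 + d) (μ.prod ν) := by
    simpa using hasSubgaussianMGF_prod_add
      (hasSubgaussianMGF_sub_integral_of_sub_le hmeas.aemeasurable hosc)
      (Y := fun z ↦ g z - h z.1) (by fun_prop) (.of_forall hgd)
  have hgint : Integrable g (μ.prod ν) := by
    simpa only [Pi.add_def, sub_add_cancel] using
      hsub.integrable.add (integrable_const μ[h])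
  rwa [integral_prod g hgint]

/-- The bounded differences property: changing the `i`-th argument of `g` changes its value by at
most `c i`. -/
def HasBoundedDifferences {κ : Type*} [DecidableEq κ] {Ω : κ → Type*} (g : (∀ i, Ω i) → ℝ)
    (c : κ → ℝ≥0) : Prop :=
  ∀ ω i a, |g (update ω i a) - g ω| ≤ c i

theorem HasBoundedDifferences.hasSubgaussianMGF {n : ℕ} {Ω : Fin n → Type*}
    [∀ i, MeasurableSpace (Ω i)] (μ : ∀ i, Measure (Ω i)) [∀ i, IsProbabilityMeasure (μ i)]
    {g : (∀ i, Ω i) → ℝ} {c : Fin n → ℝ≥0} (hgc : HasBoundedDifferences g c) (hg : Measurable g) :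
    HasSubgaussianMGF (fun ω ↦ g ω - (Measure.pi μ)[g]) (∑ i, (c i / 2) ^ 2) (Measure.pi μ) := by
  induction n with
  | zero => simp [Subsingleton.elim _ (default : ∀ i, Ω i)]
  | succ n ih =>
    let e := MeasurableEquiv.piFinSuccAbove Ω 0
    have he : MeasurePreserving e (Measure.pi μ)
        ((μ 0).prod (Measure.pi fun i ↦ μ (Fin.succAbove 0 i))) :=
      measurePreserving_piFinSuccAbove μ 0
    have hfst (a a' : Ω 0) (ω : ∀ i, Ω (Fin.succAbove 0 i)) :
        g (e.symm (a, ω)) - g (e.symm (a', ω)) ≤ c 0 := by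
      have := (abs_le.1 (hgc (e.symm (a', ω)) 0 a)).2
      rwa [show update (e.symm (a', ω)) 0 a = e.symm (a, ω) from Fin.update_insertNth ..] at this
    have hsnd (a : Ω 0) : HasBoundedDifferences (fun ω ↦ g (e.symm (a, ω)))
        (fun i ↦ c (Fin.succAbove 0 i)) := fun ω i b ↦ by
      dsimp only
      rw [show e.symm (a, update ω i b) = update (e.symm (a, ω)) (Fin.succAbove 0 i) b from
        Fin.insertNth_update ..]
      exact hgc _ _ _
    have hprod := hasSubgaussianMGF_prod_sub_integral (μ := μ 0)
      (hg.comp e.symm.measurable) hfst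
      (fun a ↦ ih (fun i ↦ μ (Fin.succAbove 0 i)) (hsnd a) (by fun_prop))
    rw [← he.map_eq, integral_map_equiv] at hprod
    rw [Fin.sum_univ_succAbove _ 0]
    simpa only [comp_def, e.symm_apply_apply] using hprod.of_map he.aemeasurable

end BoundedDifferences

section EmpiricalMean

variable {ι α : Type*}

/-- The average of `f` over the sample `ω`. -/
noncomputable def empiricalMean {n : ℕ} (f : α → ℝ) (ω : Fin n → α) : ℝ :=
  (∑ i, f (ω i)) / n

lemma empiricalMean_update_sub {n : ℕ} (f : α → ℝ) (ω : Fin n → α) (i : Fin n) (a : α) :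
    empiricalMean f (update ω i a) - empiricalMean f ω = (f a - f (ω i)) / n := by
  have hrest : ∑ j ∈ univ.erase i, f (update ω i a j) = ∑ j ∈ univ.erase i, f (ω j) :=
    sum_congr rfl fun j hj ↦ by rw [update_of_ne (ne_of_mem_erase hj)]
  simp only [empiricalMean, ← sum_erase_add univ _ (mem_univ i), update_self, hrest]
  ring

variable [Fintype ι]

/-- The `ℓ¹` distance between a vector `m` and the empirical mean over the sample `ω` of the
vector-valued function whose coordinates are the `Z x`. -/
noncomputable def l1Deviation {n : ℕ} (m : ι → ℝ) (Z : ι → α → ℝ) (ω : Fin n → α) : ℝ :=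
  ∑ x, |m x - empiricalMean (Z x) ω|

lemma hasBoundedDifferences_l1Deviation {n : ℕ} (m : ι → ℝ) {Z : ι → α → ℝ} {M : ℝ≥0}
    (hZ : ∀ a, ∑ x, |Z x a| ≤ M) :
    HasBoundedDifferences (l1Deviation (n := n) m Z) fun _ ↦ 2 * M / n := by
  intro ω i a
  have hcoord (x : ι) :
      |(|m x - empiricalMean (Z x) (update ω i a)| - |m x - empiricalMean (Z x) ω|)| ≤
        (|Z x a| + |Z x (ω i)|) / n :=
    calc _ ≤ |m x - empiricalMean (Z x) (update ω i a) - (m x - empiricalMean (Z x) ω)| :=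
          abs_abs_sub_abs_le _ _
      _ = |Z x a - Z x (ω i)| / n := by
          rw [sub_sub_sub_cancel_left, abs_sub_comm, empiricalMean_update_sub, abs_div,
            Nat.abs_cast]
      _ ≤ (|Z x a| + |Z x (ω i)|) / n := by gcongr; exact abs_sub _ _
  calc |l1Deviation m Z (update ω i a) - l1Deviation m Z ω|
      ≤ ∑ x, (|Z x a| + |Z x (ω i)|) / n := by
        rw [l1Deviation, l1Deviation, ← sum_sub_distrib]
        exact (abs_sum_le_sum_abs _ _).trans (sum_le_sum fun x _ ↦ hcoord x)
    _ = (∑ x, |Z x a| + ∑ x, |Z x (ω i)|) / n := by rw [← sum_div, sum_add_distrib]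
    _ ≤ (M + M) / n := by gcongr <;> exact hZ _
    _ = (2 * M / n : ℝ≥0) := by push_cast; ring

variable [MeasurableSpace α] {μ : Measure α} [IsProbabilityMeasure μ]

lemma integral_abs_sub_integral_le_sqrt_variance {X : α → ℝ} (hX : MemLp X 2 μ) :
    ∫ a, |X a - μ[X]| ∂μ ≤ √Var[X; μ] := by
  have hdev : MemLp (fun a ↦ |X a - μ[X]|) 2 μ := (hX.sub (memLp_const _)).abs
  have hvar := variance_nonneg (fun a ↦ |X a - μ[X]|) μ
  rw [variance_eq_sub hdev] at hvar
  simp only [Pi.pow_apply, sq_abs] at hvar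
  refine Real.le_sqrt_of_sq_le ?_
  rw [variance_eq_integral hX.aemeasurable]
  linarith

variable {n : ℕ}

lemma memLp_empiricalMean {p : ENNReal} {X : α → ℝ} (hX : MemLp X p μ) :
    MemLp (empiricalMean X) p (Measure.pi fun _ : Fin n ↦ μ) := by
  unfold empiricalMean
  simp only [div_eq_inv_mul]
  exact (memLp_finsetSum _ fun i _ ↦
    hX.comp_measurePreserving (measurePreserving_eval _ i)).const_mul _

lemma integral_empiricalMean (hn : n ≠ 0) {X : α → ℝ} (hX : Integrable X μ) :
    ∫ ω, empiricalMean X ω ∂(Measure.pi fun _ : Fin n ↦ μ) = μ[X] := by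
  have hcoord (i : Fin n) : ∫ ω, X (ω i) ∂(Measure.pi fun _ : Fin n ↦ μ) = μ[X] :=
    integral_comp_eval (μ := fun _ ↦ μ) hX.aestronglyMeasurable
  simp only [empiricalMean]
  rw [integral_div, integral_finsetSum _ fun i _ ↦ integrable_comp_eval (μ := fun _ ↦ μ) hX]
  simp [hcoord, hn]

lemma variance_empiricalMean {X : α → ℝ} (hX : MemLp X 2 μ) :
    Var[empiricalMean X; Measure.pi fun _ : Fin n ↦ μ] = Var[X; μ] / n := by
  have hmean : empiricalMean X = fun ω : Fin n → α ↦ (n : ℝ)⁻¹ * (∑ i, fun ω ↦ X (ω i)) ω := by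
    ext ω
    rw [empiricalMean, div_eq_inv_mul, Finset.sum_apply]
  rw [hmean, variance_const_mul, variance_sum_pi (μ := fun _ ↦ μ) fun _ ↦ hX]
  simp only [sum_const, card_univ, Fintype.card_fin, nsmul_eq_mul]
  field_simp

lemma integral_abs_sub_empiricalMean_le (hn : n ≠ 0) {X : α → ℝ} (hX : MemLp X 2 μ) :
    ∫ ω, |μ[X] - empiricalMean X ω| ∂(Measure.pi fun _ : Fin n ↦ μ) ≤
      √(∫ a, X a ^ 2 ∂μ) / √n := by
  have hdev := integral_abs_sub_integral_le_sqrt_variance (memLp_empiricalMean (n := n) hX)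
  rw [integral_empiricalMean hn (hX.integrable one_le_two), variance_empiricalMean hX] at hdev
  calc ∫ ω, |μ[X] - empiricalMean X ω| ∂(Measure.pi fun _ : Fin n ↦ μ)
      ≤ √(Var[X; μ] / n) := by simpa only [abs_sub_comm] using hdev
    _ ≤ √((∫ a, X a ^ 2 ∂μ) / n) := by gcongr; exact variance_le_expectation_sq hX.1
    _ = √(∫ a, X a ^ 2 ∂μ) / √n := Real.sqrt_div' _ n.cast_nonneg

variable {Z : ι → α → ℝ}

lemma integral_l1Deviation_le (hn : n ≠ 0) (hZ : ∀ x, MemLp (Z x) 2 μ) :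
    ∫ ω, l1Deviation (fun x ↦ μ[Z x]) Z ω ∂(Measure.pi fun _ : Fin n ↦ μ) ≤
      (∑ x, √(∫ a, Z x a ^ 2 ∂μ)) / √n := by
  have hint (x : ι) : Integrable (fun ω ↦ |μ[Z x] - empiricalMean (Z x) ω|)
      (Measure.pi fun _ : Fin n ↦ μ) :=
    ((integrable_const _).sub ((memLp_empiricalMean (hZ x)).integrable one_le_two)).abs
  simp only [l1Deviation]
  rw [integral_finsetSum _ fun x _ ↦ hint x, sum_div]
  exact sum_le_sum fun x _ ↦ integral_abs_sub_empiricalMean_le hn (hZ x)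

variable {M : ℝ≥0}

lemma memLp_of_sum_abs_le (hZm : ∀ x, Measurable (Z x)) (hZ : ∀ a, ∑ x, |Z x a| ≤ M)
    (p : ENNReal) (x : ι) : MemLp (Z x) p μ :=
  .of_bound (hZm x).aestronglyMeasurable M <| .of_forall fun a ↦
    (single_le_sum (fun y _ ↦ abs_nonneg (Z y a)) (mem_univ x)).trans (hZ a)

theorem measureReal_l1Deviation_ge_le (hn : n ≠ 0) (hZm : ∀ x, Measurable (Z x))
    (hZ : ∀ a, ∑ x, |Z x a| ≤ M) {t : ℝ} (ht : 0 ≤ t) :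
    (Measure.pi fun _ : Fin n ↦ μ).real
        {ω | (∑ x, √(∫ a, Z x a ^ 2 ∂μ) + t) / √n ≤ l1Deviation (fun x ↦ μ[Z x]) Z ω} ≤
      Real.exp (-t ^ 2 / (2 * M ^ 2)) := by
  set P := Measure.pi fun _ : Fin n ↦ μ
  set D : (Fin n → α) → ℝ := l1Deviation (fun x ↦ μ[Z x]) Z
  have hDm : Measurable D := by unfold D l1Deviation empiricalMean; fun_prop
  have hsub := (hasBoundedDifferences_l1Deviation (fun x ↦ μ[Z x]) hZ).hasSubgaussianMGF
    (fun _ : Fin n ↦ μ) hDm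
  have hmean : P[D] ≤ (∑ x, √(∫ a, Z x a ^ 2 ∂μ)) / √n :=
    integral_l1Deviation_le hn fun x ↦ memLp_of_sum_abs_le hZm hZ 2 x
  calc P.real {ω | (∑ x, √(∫ a, Z x a ^ 2 ∂μ) + t) / √n ≤ D ω}
      ≤ P.real {ω | t / √n ≤ D ω - P[D]} := by
        refine measureReal_mono fun ω hω ↦ ?_
        rw [Set.mem_ofPred_eq, add_div] at hω
        rw [Set.mem_ofPred_eq]
        linarith
    _ ≤ Real.exp (-(t / √n) ^ 2 / (2 * (∑ _ : Fin n, (2 * M / n / 2) ^ 2 : ℝ≥0))) :=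
        hsub.measure_ge_le (by positivity)
    _ = Real.exp (-t ^ 2 / (2 * M ^ 2)) := by
        have hvar : 2 * ((∑ _ : Fin n, (2 * M / n / 2) ^ 2 : ℝ≥0) : ℝ) = 2 * M ^ 2 / n := by
          simp only [sum_const, card_univ, Fintype.card_fin, nsmul_eq_mul]
          push_cast
          field_simp
        rw [hvar, div_pow, Real.sq_sqrt n.cast_nonneg, ← neg_div,
          div_div_div_cancel_right₀ (by positivity)]

end EmpiricalMean

section FiniteSampleSpace

variable {κ α : Type*} [Fintype κ]

lemma pi_le_sum_prod_singleton [MeasurableSpace α] (μ : Measure α) [SigmaFinite μ]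
    (s : Finset (κ → α)) : (Measure.pi fun _ : κ ↦ μ) s ≤ ∑ ω ∈ s, ∏ i, μ {ω i} :=
  calc (Measure.pi fun _ : κ ↦ μ) s
      = (Measure.pi fun _ : κ ↦ μ) (⋃ ω ∈ s, {ω}) :=
        congrArg _ (Set.biUnion_of_singleton (s : Set (κ → α))).symm
    _ ≤ ∑ ω ∈ s, (Measure.pi fun _ : κ ↦ μ) {ω} := measure_biUnion_finset_le _ _
    _ = ∑ ω ∈ s, ∏ i, μ {ω i} := by simp only [Measure.pi_singleton]

lemma pi_toMeasure_eq_sum_prod [MeasurableSpace α] [MeasurableSingletonClass α] (P : PMF α)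
    (s : Finset (κ → α)) : (Measure.pi fun _ : κ ↦ P.toMeasure) s = ∑ ω ∈ s, ∏ i, P (ω i) := by
  simp only [← sum_measure_singleton, Measure.pi_singleton,
    P.toMeasure_apply_singleton _ (measurableSet_singleton _)]

variable {ι : Type*} [Fintype ι] [Fintype α] {n : ℕ} {Z : ι → α → ℝ} {M : ℝ≥0} {t : ℝ}

lemma sum_prod_l1Deviation_ge_le (P : PMF α) (hn : n ≠ 0) (hZ : ∀ a, ∑ x, |Z x a| ≤ M)
    (ht : 0 ≤ t) :
    ∑ ω : Fin n → α with (∑ x, √(∑ a, (P a).toReal * Z x a ^ 2) + t) / √n ≤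
        l1Deviation (fun x ↦ ∑ a, (P a).toReal * Z x a) Z ω, ∏ i, P (ω i) ≤
      ENNReal.ofReal (Real.exp (-t ^ 2 / (2 * M ^ 2))) := by
  let _ : MeasurableSpace α := ⊤
  have _ : DiscreteMeasurableSpace α := ⟨fun _ ↦ trivial⟩
  have htail := measureReal_l1Deviation_ge_le (μ := P.toMeasure) hn
    (fun x ↦ .of_discrete (f := Z x)) hZ ht
  simp only [PMF.integral_eq_sum, smul_eq_mul] at htail
  rw [← pi_toMeasure_eq_sum_prod, coe_filter_univ]
  exact ENNReal.le_ofReal_iff_toReal_le (measure_ne_top _ _) (Real.exp_pos _).le |>.2 htail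

theorem measure_l1Deviation_ge_le_of_singleton_le [MeasurableSpace α] {μ : Measure α}
    [SigmaFinite μ] {P : PMF α} (hμP : ∀ a, μ {a} ≤ P a) (hn : n ≠ 0)
    (hZ : ∀ a, ∑ x, |Z x a| ≤ M) (ht : 0 ≤ t) :
    (Measure.pi fun _ : Fin n ↦ μ) {ω | (∑ x, √(∑ a, (P a).toReal * Z x a ^ 2) + t) / √n ≤
        l1Deviation (fun x ↦ ∑ a, (P a).toReal * Z x a) Z ω} ≤
      ENNReal.ofReal (Real.exp (-t ^ 2 / (2 * M ^ 2))) := by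
  rw [← coe_filter_univ]
  refine (pi_le_sum_prod_singleton μ _).trans (le_trans ?_ (sum_prod_l1Deviation_ge_le P hn hZ ht))
  gcongr with ω _ i
  exact hμP _

end FiniteSampleSpace

section SignedSampling

variable {ι : Type*}

/-- The signed indicator `S·1[X = x]` of a sample `(X, S)`, where the sign `S = ±1` is encoded by a
Boolean, `true` standing for `+1`. -/
def signedIndicator [DecidableEq ι] (x : ι) (a : ι × Bool) : ℝ :=
  if a.1 = x then (if a.2 then 1 else -1) else 0

/-- The signed empirical estimator `p̃ₓ = (γ/N)·∑ᵢ Sᵢ·1[Xᵢ = x]` of the sample `ω`. -/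
noncomputable def signedEmpirical [DecidableEq ι] {N : ℕ} (γ : ℝ) (ω : Fin N → ι × Bool)
    (x : ι) : ℝ :=
  γ / N * ∑ i, signedIndicator x (ω i)

lemma empiricalMean_mul_signedIndicator [DecidableEq ι] {N : ℕ} (γ : ℝ) (ω : Fin N → ι × Bool)
    (x : ι) :
    empiricalMean (fun a ↦ γ * signedIndicator x a) ω = signedEmpirical γ ω x := by
  rw [empiricalMean, signedEmpirical, ← mul_sum, div_mul_eq_mul_div]

variable [Fintype ι] {u v : ι → ℝ} {γ : ℝ}

/-- The law of a signed sample: `(x, +1)` has probability `u x / γ` and `(x, -1)` has probability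
`v x / γ`, where `γ` is the total mass of `u + v`. -/
noncomputable def signedSamplePMF (u v : ι → ℝ) (γ : ℝ) (hu : ∀ x, 0 ≤ u x) (hv : ∀ x, 0 ≤ v x)
    (hγ : 0 < γ) (huv : ∑ x, (u x + v x) = γ) : PMF (ι × Bool) :=
  .ofFintype (fun a ↦ ENNReal.ofReal ((if a.2 then u a.1 else v a.1) / γ)) <| by
    have hnonneg (a : ι × Bool) : 0 ≤ (if a.2 then u a.1 else v a.1) / γ := by
      split
      exacts [div_nonneg (hu _) hγ.le, div_nonneg (hv _) hγ.le]
    rw [← ENNReal.ofReal_sum_of_nonneg fun a _ ↦ hnonneg a, ← sum_div, Fintype.sum_prod_type]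
    simp [huv, hγ.ne']

lemma sum_signedSamplePMF_mul (hu : ∀ x, 0 ≤ u x) (hv : ∀ x, 0 ≤ v x) (hγ : 0 < γ)
    (huv : ∑ x, (u x + v x) = γ) (f : ι × Bool → ℝ) :
    ∑ a, (signedSamplePMF u v γ hu hv hγ huv a).toReal * f a =
      (∑ x, (u x * f (x, true) + v x * f (x, false))) / γ := by
  rw [Fintype.sum_prod_type, sum_div]
  refine sum_congr rfl fun x _ ↦ ?_
  have := div_nonneg (hu x) hγ.le
  have := div_nonneg (hv x) hγ.le
  simp only [signedSamplePMF, PMF.ofFintype_apply, Fintype.sum_bool, ↓reduceIte,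
    Bool.false_eq_true, ENNReal.toReal_ofReal, *]
  ring

variable [DecidableEq ι]

lemma sum_abs_mul_signedIndicator (hγ : 0 ≤ γ) (a : ι × Bool) :
    ∑ x, |γ * signedIndicator x a| = γ := by
  obtain ⟨y, b⟩ := a
  cases b <;> simp [signedIndicator, apply_ite, abs_of_nonneg hγ]

lemma sum_signedSamplePMF_mul_signedIndicator (hu : ∀ x, 0 ≤ u x) (hv : ∀ x, 0 ≤ v x) (hγ : 0 < γ)
    (huv : ∑ x, (u x + v x) = γ) (x : ι) :
    ∑ a, (signedSamplePMF u v γ hu hv hγ huv a).toReal * (γ * signedIndicator x a) =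
      u x - v x := by
  rw [sum_signedSamplePMF_mul]
  simp only [signedIndicator, ↓reduceIte, Bool.false_eq_true, mul_ite, mul_one, mul_zero, mul_neg,
    sum_add_distrib, sum_ite_eq', mem_univ]
  field_simp
  ring

lemma sum_signedSamplePMF_mul_signedIndicator_sq (hu : ∀ x, 0 ≤ u x) (hv : ∀ x, 0 ≤ v x)
    (hγ : 0 < γ) (huv : ∑ x, (u x + v x) = γ) (x : ι) :
    ∑ a, (signedSamplePMF u v γ hu hv hγ huv a).toReal * (γ * signedIndicator x a) ^ 2 =
      γ ^ 2 * ((u x + v x) / γ) := by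
  rw [sum_signedSamplePMF_mul]
  simp only [signedIndicator, ↓reduceIte, Bool.false_eq_true, mul_ite, mul_one, mul_zero, mul_neg,
    ite_pow, even_two.neg_pow, zero_pow two_ne_zero, sum_add_distrib, sum_ite_eq', mem_univ]
  ring

theorem measure_signedEmpirical_dist_ge_le [MeasurableSpace ι] {μ : Measure (ι × Bool)}
    [SigmaFinite μ] (hu : ∀ x, 0 ≤ u x) (hv : ∀ x, 0 ≤ v x) (hγ : 0 < γ)
    (huv : ∑ x, (u x + v x) = γ)
    (hμt : ∀ x, μ {(x, true)} ≤ ENNReal.ofReal (u x / γ))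
    (hμf : ∀ x, μ {(x, false)} ≤ ENNReal.ofReal (v x / γ)) {N : ℕ} (hN : N ≠ 0) {t : ℝ}
    (ht : 0 ≤ t) :
    (Measure.pi fun _ : Fin N ↦ μ) {ω | γ * (∑ x, √((u x + v x) / γ) + t) / √N ≤
        ∑ x, |u x - v x - signedEmpirical γ ω x|} ≤ ENNReal.ofReal (Real.exp (-t ^ 2 / 2)) := by
  have hμP (a : ι × Bool) : μ {a} ≤ signedSamplePMF u v γ hu hv hγ huv a := by
    obtain ⟨x, _ | _⟩ := a
    exacts [hμf x, hμt x]
  have hbound (a : ι × Bool) : ∑ x, |γ * signedIndicator x a| ≤ (γ.toNNReal : ℝ) := by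
    rw [sum_abs_mul_signedIndicator hγ.le, Real.coe_toNNReal _ hγ.le]
  have htail := measure_l1Deviation_ge_le_of_singleton_le hμP hN hbound (mul_nonneg hγ.le ht)
  have hexp : -(γ * t) ^ 2 / (2 * (γ.toNNReal : ℝ) ^ 2) = -t ^ 2 / 2 := by
    rw [Real.coe_toNNReal _ hγ.le]
    field_simp
  simpa only [l1Deviation, empiricalMean_mul_signedIndicator,
    sum_signedSamplePMF_mul_signedIndicator, sum_signedSamplePMF_mul_signedIndicator_sq,
    Real.sqrt_mul (sq_nonneg γ), Real.sqrt_sq hγ.le, ← mul_sum, ← mul_add, hexp] using htail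

end SignedSampling

lemma ofReal_one_sub_le_measure_of_compl_le {Ω : Type*} [MeasurableSpace Ω] {μ : Measure Ω}
    [IsProbabilityMeasure μ] {s : Set Ω} {δ : ℝ} (hδ : 0 ≤ δ) (hs : μ sᶜ ≤ ENNReal.ofReal δ) :
    ENNReal.ofReal (1 - δ) ≤ μ s := by
  rw [ENNReal.ofReal_sub 1 hδ, ENNReal.ofReal_one, tsub_le_iff_right]
  calc 1 = μ (s ∪ sᶜ) := by rw [Set.union_compl_self, measure_univ]
    _ ≤ μ s + μ sᶜ := measure_union_le _ _
    _ ≤ μ s + ENNReal.ofReal δ := by gcongr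

lemma exp_neg_sq_sqrt_two_mul_log_inv_le {δ : ℝ} (hδ : 0 < δ) :
    Real.exp (-√(2 * Real.log (1 / δ)) ^ 2 / 2) ≤ δ := by
  have hsq : 2 * Real.log (1 / δ) ≤ √(2 * Real.log (1 / δ)) ^ 2 :=
    Real.sq_sqrt'.symm ▸ le_max_left _ _
  rw [← Real.le_log_iff_exp_le hδ]
  rw [one_div, Real.log_inv] at hsq ⊢
  linarith

lemma sqrt_two_mul_log_one_div_le {δ : ℝ} (hδ0 : 0 < δ) (hδ1 : δ ≤ 1) :
    √(2 * Real.log (1 / δ)) ≤ √(8 * Real.log (2 / δ)) := by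
  have hnonneg : 0 ≤ Real.log (1 / δ) := Real.log_nonneg ((one_le_div hδ0).2 hδ1)
  gcongr <;> norm_num

lemma mul_div_sqrt_le_two_mul {γ s n ε : ℝ} (hε : 0 < ε) (hn : 0 < n)
    (h : γ ^ 2 / (4 * ε ^ 2) * s ^ 2 ≤ n) : γ * s / √n ≤ 2 * ε := by
  have hsqrt : γ * s / (2 * ε) ≤ √n := by
    refine Real.le_sqrt_of_sq_le (le_of_eq_of_le ?_ h)
    ring
  rwa [div_le_iff₀' (by positivity), ← div_le_iff₀ (Real.sqrt_pos.2 hn)] at hsqrt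

theorem estimation_based_weak_distillation_cost_general
    {ι : Type*} [Fintype ι] [DecidableEq ι] [MeasurableSpace ι] {u v : ι → ℝ}
    (hu : ∀ x, 0 ≤ u x) (hv : ∀ x, 0 ≤ v x) {γ : ℝ} (hγ : 0 < γ) (huv : ∑ x, (u x + v x) = γ)
    {μ : Measure (ι × Bool)} [IsProbabilityMeasure μ]
    (hμt : ∀ x, μ {(x, true)} = ENNReal.ofReal (u x / γ))
    (hμf : ∀ x, μ {(x, false)} = ENNReal.ofReal (v x / γ))
    {N : ℕ} (hN : 0 < N) {ε δ : ℝ} (hε : 0 < ε) (hδ : 0 < δ)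
    (hNbound : γ ^ 2 / (4 * ε ^ 2) *
      (∑ x, √((u x + v x) / γ) + √(2 * Real.log (1 / δ))) ^ 2 ≤ N) :
    ENNReal.ofReal (1 - δ) ≤ (Measure.pi fun _ : Fin N ↦ μ)
      {ω | 1 / 2 * ∑ x, |u x - v x - signedEmpirical γ ω x| ≤ ε} := by
  refine ofReal_one_sub_le_measure_of_compl_le hδ.le ?_
  have hthreshold := mul_div_sqrt_le_two_mul hε (Nat.cast_pos.2 hN) hNbound
  have htail := measure_signedEmpirical_dist_ge_le hu hv hγ huv (fun x ↦ (hμt x).le)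
    (fun x ↦ (hμf x).le) hN.ne' (Real.sqrt_nonneg (2 * Real.log (1 / δ)))
  refine (measure_mono fun ω hω ↦ ?_).trans
    (htail.trans (ENNReal.ofReal_le_ofReal (exp_neg_sq_sqrt_two_mul_log_inv_le hδ)))
  rw [Set.mem_compl_iff, Set.mem_ofPred_eq, not_le] at hω
  rw [Set.mem_ofPred_eq]
  linarith

/-- Proposition 1: sampling cost of the probability-estimation-based weak
distillation. Given the quasi-probability decomposition `p = c₊p⁺ − c₋p⁻` with
`c₊ − c₋ = 1`, `γ = c₊ + c₋`, and the sampling model of `N` i.i.d. pairs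
`(Xᵢ, Sᵢ) ∈ ι × Bool` with `P(Xᵢ = x, Sᵢ = +1) = c₊p⁺ₓ/γ` and
`P(Xᵢ = x, Sᵢ = −1) = c₋p⁻ₓ/γ`, if
`N ≥ (γ²/(4ε²))·(∑_x √(q_x) + √(8·log(2/δ)))²`, then the signed empirical
estimator `p̃ₓ(ω) = (γ/N)·∑ᵢ Sᵢ·1[Xᵢ = x]` satisfies
`P((1/2)·∑_x |p_x − p̃_x| ≤ ε) ≥ 1 − δ`. -/
theorem estimation_based_weak_distillation_cost
    {ι : Type*} [Fintype ι] [DecidableEq ι] [MeasurableSpace ι]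
    (pp pm : ι → ℝ)
    (hpp0 : ∀ x, 0 ≤ pp x) (hpp1 : ∑ x, pp x = 1)
    (hpm0 : ∀ x, 0 ≤ pm x) (hpm1 : ∑ x, pm x = 1)
    (cp cm : ℝ) (hcp : 0 ≤ cp) (hcm : 0 ≤ cm) (hc : cp - cm = 1)
    (γ : ℝ) (hγ : γ = cp + cm)
    (p : ι → ℝ) (hp : ∀ x, p x = cp * pp x - cm * pm x)
    (hp0 : ∀ x, 0 ≤ p x)
    (q : ι → ℝ) (hq : ∀ x, q x = (cp * pp x + cm * pm x) / γ)
    (μ1 : Measure (ι × Bool)) [IsProbabilityMeasure μ1]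
    (hμt : ∀ x, μ1 {(x, true)} = ENNReal.ofReal (cp * pp x / γ))
    (hμf : ∀ x, μ1 {(x, false)} = ENNReal.ofReal (cm * pm x / γ))
    (N : ℕ) (hN : 0 < N)
    (ε δ : ℝ) (hε : 0 < ε) (hδ0 : 0 < δ) (hδ1 : δ < 1)
    (hNbound : (N : ℝ) ≥ γ ^ 2 / (4 * ε ^ 2) *
      (∑ x, Real.sqrt (q x) + Real.sqrt (8 * Real.log (2 / δ))) ^ 2) :
    ENNReal.ofReal (1 - δ) ≤
      (Measure.pi fun _ : Fin N => μ1)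
        {ω | (1 / 2) * ∑ x, |p x - (γ / N) *
            ∑ i, (if (ω i).1 = x then (if (ω i).2 then (1 : ℝ) else -1) else 0)| ≤ ε} := by
  have huv : ∑ x, (cp * pp x + cm * pm x) = γ := by
    rw [sum_add_distrib, ← mul_sum, ← mul_sum, hpp1, hpm1, mul_one, mul_one, hγ]
  simp only [hp]
  simp only [hq] at hNbound
  refine estimation_based_weak_distillation_cost_general
    (fun x ↦ mul_nonneg hcp (hpp0 x)) (fun x ↦ mul_nonneg hcm (hpm0 x)) (by linarith) huv
    hμt hμf hN hε hδ0 (le_trans ?_ hNbound)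
  gcongr _ * (_ + ?_) ^ 2
  exact sqrt_two_mul_log_one_div_le hδ0 hδ1.le
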